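/- Let M = (d, Q, δ) be a reset counter machine with states p_init, p_final ∈ Q, and let G(M) be the associated first-order grammar. For n̄, n̄' ∈ ℕ^d write v(n̄,n̄') for the 2d-tuple of terms (I^{n₁}⊥, I^{n'₁}⊥, …, I^{n_d}⊥, I^{n'_d}⊥). Then the symmetric closure of the following relation on terms of G(M) is a bisimulation in L_{G(M)}: the union of (i) the identity relation on all terms; (ii) all pairs (A_p(v(n̄,n̄')), B_p(v(n̄,n̄'))) such that n_j ≥ n'_j for all j and p_final is not reachable from the configuration (p, n̄ − n̄') in M; (iii) all pairs (A_(q,i)(v(n̄,n̄')), B_(q,i,1)(v(n̄,n̄'))) such that n_j ≥ n'_j for all j, n_i > n'_i, and p_final is not reachable from the configuration (q, m̄) in M, where m̄ = n̄ − n̄' except that m_i = n_i − n'_i − 1; (iv) all pairs (A_(q,i)(v(n̄,n̄')), B_(q,i,2)(v(n̄,n̄'))) such that n_j ≥ n'_j for all j and n_i = n'_i. -/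

import Mathlib

/-!
Pairs `A_p(v), B_p(v)` differ in their moves only through the instructions that decrement, and
through the rule `A_{p_final} → ⊥`, which is excluded because `p_final` is unreachable.
Increments and resets are matched by the same instruction and correspond to a machine step on
`n̄ − n̄'`. A decrement of counter `i` that keeps to the `A` side is answered by `B_(q,i,1)` when
`n_i > n'_i` (the machine can then really decrement) and by `B_(q,i,2)` when `n_i = n'_i`; a
decrement to `B_(q,i,1)` or `B_(q,i,2)` is answered by the identical term. From `A_(q,i)` and
`B_(q,i,1)` the action `a` raises `n'_i` by one, so the pair `A_q, B_q` stands for the decremented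
configuration, and `b` exposes the same term. From `A_(q,i)` and `B_(q,i,2)` the
action `a` leads to the same term, and `b` exposes `I^{n_i}⊥` and `I^{n'_i}⊥`, which coincide
exactly when `n_i = n'_i`.

On the syntactic side, every rule used here substitutes the tuple `v(n̄,n̄')` into `x̄` with a few
entries overwritten; `vterms_set_even` and `vterms_set_odd`, through `Matches.subst_inc`,
`Matches.subst_dec` and `Matches.subst_reset`, turn the result back into a tuple of
the form `v(m̄,m̄')`.
-/

/-- First-order terms over a set `N` of function symbols (nonterminals);
variables `x_{i+1}` are represented as `var i`. -/
inductive FOTerm (N : Type) : Type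
  | var : ℕ → FOTerm N
  | app : N → List (FOTerm N) → FOTerm N

/-- Substitution of terms for variables. -/
def FOTerm.subst {N : Type} (σ : ℕ → FOTerm N) : FOTerm N → FOTerm N
  | .var i => σ i
  | .app A ts => .app A (ts.attach.map fun ⟨t, _⟩ => t.subst σ)

/-- A first-order grammar: ranked nonterminals, actions, and root-rewriting rules;
`Rule A a V` means the rule `A(x₁,…,x_{arity A}) →a V` is in the grammar. -/
structure Grammar where
  N : Type
  arity : N → ℕ
  Act : Type
  Rule : N → Act → FOTerm N → Prop

/-- The labelled transition system `L_G` induced by a grammar: each rule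
`A(x₁,…,x_m) →a V` induces transitions `(A(x₁,…,x_m))σ →a Vσ` for all substitutions σ. -/
inductive Grammar.Step (G : Grammar) : FOTerm G.N → G.Act → FOTerm G.N → Prop
  | step (A : G.N) (a : G.Act) (V : FOTerm G.N) (σ : ℕ → FOTerm G.N) :
      G.Rule A a V →
      G.Step (.app A ((List.range (G.arity A)).map σ)) a (V.subst σ)

/-- A (symmetric) bisimulation for the LTS `L_G`. -/
def Grammar.IsBisimulation (G : Grammar) (B : FOTerm G.N → FOTerm G.N → Prop) : Prop :=
  (∀ T U, B T U → B U T) ∧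
  ∀ T U, B T U → ∀ a T', G.Step T a T' → ∃ U', G.Step U a U' ∧ B T' U'

/-- Bisimilarity: `T ∼ U` iff some bisimulation contains `(T, U)`. -/
def Grammar.Bisim (G : Grammar) (T U : FOTerm G.N) : Prop :=
  ∃ B, G.IsBisimulation B ∧ B T U

/-- Operations of a reset counter machine with `d` counters. -/
inductive RCMOp (d : ℕ) : Type
  | inc : Fin d → RCMOp d
  | dec : Fin d → RCMOp d
  | reset : Fin d → RCMOp d

/-- A reset counter machine `M = (d, Q, δ)`. -/
structure RCM where
  d : ℕ
  Q : Type
  finQ : Finite Q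
  δ : Q → RCMOp d → Q → Prop

/-- The step relation on configurations `(q, n̄) ∈ Q × ℕ^d` of an RCM. -/
inductive RCM.StepR (M : RCM) : (M.Q × (Fin M.d → ℕ)) → (M.Q × (Fin M.d → ℕ)) → Prop
  | inc {p q : M.Q} {i : Fin M.d} {n : Fin M.d → ℕ} :
      M.δ p (.inc i) q → M.StepR (p, n) (q, Function.update n i (n i + 1))
  | dec {p q : M.Q} {i : Fin M.d} {n : Fin M.d → ℕ} :
      M.δ p (.dec i) q → 0 < n i → M.StepR (p, n) (q, Function.update n i (n i - 1))
  | reset {p q : M.Q} {i : Fin M.d} {n : Fin M.d → ℕ} :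
      M.δ p (.reset i) q → M.StepR (p, n) (q, Function.update n i 0)

/-- `pfin` is reachable from configuration `c`: `c →* (pfin, m̄)` for some `m̄`. -/
def RCM.ReachesFinal (M : RCM) (pfin : M.Q) (c : M.Q × (Fin M.d → ℕ)) : Prop :=
  ∃ m : Fin M.d → ℕ, Relation.ReflTransGen M.StepR c (pfin, m)

/-- Nonterminals of the grammar `G(M)`: unary `I`, nullary `bot`, and
`A_p, B_p, A_(p,i), B_(p,i,1), B_(p,i,2)` of arity `2d` for `p ∈ Q`, `1 ≤ i ≤ d`. -/
inductive GNT (Q : Type) (d : ℕ) : Type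
  | I : GNT Q d
  | bot : GNT Q d
  | A : Q → GNT Q d
  | B : Q → GNT Q d
  | Ai : Q → Fin d → GNT Q d
  | B1 : Q → Fin d → GNT Q d
  | B2 : Q → Fin d → GNT Q d

def GNT.arity {Q : Type} {d : ℕ} : GNT Q d → ℕ
  | .I => 1
  | .bot => 0
  | _ => 2 * d

/-- Actions of `G(M)`: the instructions of `M`, plus auxiliary actions `a` and `b`. -/
inductive GAct (Q : Type) (d : ℕ) : Type
  | instr : Q → RCMOp d → Q → GAct Q d
  | a : GAct Q d
  | b : GAct Q d

/-- The tuple of variables `x̄ = (x₁,…,x_{2d})`. -/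
def xbar (Q : Type) (d : ℕ) : List (FOTerm (GNT Q d)) :=
  (List.range (2 * d)).map FOTerm.var

/-- The rules of the grammar `G(M)` (for final state `pfin`). -/
inductive GRule (M : RCM) (pfin : M.Q) :
    GNT M.Q M.d → GAct M.Q M.d → FOTerm (GNT M.Q M.d) → Prop
  | irule : GRule M pfin .I .a (.var 0)
  | finrule : GRule M pfin (.A pfin) .a (.app .bot [])
  | incA {p q : M.Q} {i : Fin M.d} : M.δ p (.inc i) q →
      GRule M pfin (.A p) (.instr p (.inc i) q)
        (.app (.A q) ((xbar M.Q M.d).set (2 * (i : ℕ)) (.app .I [.var (2 * (i : ℕ))])))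
  | incB {p q : M.Q} {i : Fin M.d} : M.δ p (.inc i) q →
      GRule M pfin (.B p) (.instr p (.inc i) q)
        (.app (.B q) ((xbar M.Q M.d).set (2 * (i : ℕ)) (.app .I [.var (2 * (i : ℕ))])))
  | resetA {p q : M.Q} {i : Fin M.d} : M.δ p (.reset i) q →
      GRule M pfin (.A p) (.instr p (.reset i) q)
        (.app (.A q) (((xbar M.Q M.d).set (2 * (i : ℕ)) (.app .bot [])).set
          (2 * (i : ℕ) + 1) (.app .bot [])))
  | resetB {p q : M.Q} {i : Fin M.d} : M.δ p (.reset i) q →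
      GRule M pfin (.B p) (.instr p (.reset i) q)
        (.app (.B q) (((xbar M.Q M.d).set (2 * (i : ℕ)) (.app .bot [])).set
          (2 * (i : ℕ) + 1) (.app .bot [])))
  | decA {p q : M.Q} {i : Fin M.d} : M.δ p (.dec i) q →
      GRule M pfin (.A p) (.instr p (.dec i) q) (.app (.Ai q i) (xbar M.Q M.d))
  | decAB1 {p q : M.Q} {i : Fin M.d} : M.δ p (.dec i) q →
      GRule M pfin (.A p) (.instr p (.dec i) q) (.app (.B1 q i) (xbar M.Q M.d))
  | decAB2 {p q : M.Q} {i : Fin M.d} : M.δ p (.dec i) q →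
      GRule M pfin (.A p) (.instr p (.dec i) q) (.app (.B2 q i) (xbar M.Q M.d))
  | decBB1 {p q : M.Q} {i : Fin M.d} : M.δ p (.dec i) q →
      GRule M pfin (.B p) (.instr p (.dec i) q) (.app (.B1 q i) (xbar M.Q M.d))
  | decBB2 {p q : M.Q} {i : Fin M.d} : M.δ p (.dec i) q →
      GRule M pfin (.B p) (.instr p (.dec i) q) (.app (.B2 q i) (xbar M.Q M.d))
  | auxAa {p q : M.Q} {i : Fin M.d} : M.δ p (.dec i) q →
      GRule M pfin (.Ai q i) .a
        (.app (.A q) ((xbar M.Q M.d).set (2 * (i : ℕ) + 1) (.app .I [.var (2 * (i : ℕ) + 1)])))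
  | auxB1a {p q : M.Q} {i : Fin M.d} : M.δ p (.dec i) q →
      GRule M pfin (.B1 q i) .a
        (.app (.B q) ((xbar M.Q M.d).set (2 * (i : ℕ) + 1) (.app .I [.var (2 * (i : ℕ) + 1)])))
  | auxB2a {p q : M.Q} {i : Fin M.d} : M.δ p (.dec i) q →
      GRule M pfin (.B2 q i) .a
        (.app (.A q) ((xbar M.Q M.d).set (2 * (i : ℕ) + 1) (.app .I [.var (2 * (i : ℕ) + 1)])))
  | auxAb {p q : M.Q} {i : Fin M.d} : M.δ p (.dec i) q →
      GRule M pfin (.Ai q i) .b (.var (2 * (i : ℕ)))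
  | auxB1b {p q : M.Q} {i : Fin M.d} : M.δ p (.dec i) q →
      GRule M pfin (.B1 q i) .b (.var (2 * (i : ℕ)))
  | auxB2b {p q : M.Q} {i : Fin M.d} : M.δ p (.dec i) q →
      GRule M pfin (.B2 q i) .b (.var (2 * (i : ℕ) + 1))

/-- The grammar `G(M)` associated with an RCM `M` and final state `pfin`. -/
@[reducible] def GrammarOf (M : RCM) (pfin : M.Q) : Grammar where
  N := GNT M.Q M.d
  arity := GNT.arity
  Act := GAct M.Q M.d
  Rule := GRule M pfin

/-- `iterTerm I bot n` is the term `Iⁿ⊥`. -/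
def iterTerm {N : Type} (I bot : N) : ℕ → FOTerm N
  | 0 => .app bot []
  | n + 1 => .app I [iterTerm I bot n]

/-- `Iⁿ⊥` in the grammar `G(M)`. -/
@[reducible] def ipow {Q : Type} {d : ℕ} (n : ℕ) : FOTerm (GNT Q d) :=
  iterTerm GNT.I GNT.bot n

/-- The `2d`-tuple of arguments `(I^{n₁}⊥, I^{n'₁}⊥, …, I^{n_d}⊥, I^{n'_d}⊥)`. -/
def vterms {Q : Type} {d : ℕ} (n n' : Fin d → ℕ) : List (FOTerm (GNT Q d)) :=
  (List.finRange d).flatMap fun i => [ipow (n i), ipow (n' i)]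

/-- The relation of Statement 11 (before taking the symmetric closure): the union of
(i) the identity; (ii) pairs `(A_p(v(n̄,n̄')), B_p(v(n̄,n̄')))` with `n̄ ≥ n̄'` and
`p_final` not reachable from `(p, n̄ − n̄')`; (iii) pairs
`(A_(q,i)(v(n̄,n̄')), B_(q,i,1)(v(n̄,n̄')))` with `n̄ ≥ n̄'`, `n_i > n'_i`, and `p_final`
not reachable from `(q, m̄)` where `m̄ = n̄ − n̄'` except `m_i = n_i − n'_i − 1`;
(iv) pairs `(A_(q,i)(v(n̄,n̄')), B_(q,i,2)(v(n̄,n̄')))` with `n̄ ≥ n̄'` and `n_i = n'_i`. -/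
def DefenderRel (M : RCM) (pfin : M.Q) :
    FOTerm (GNT M.Q M.d) → FOTerm (GNT M.Q M.d) → Prop := fun T U =>
  T = U ∨
  (∃ (p : M.Q) (n n' : Fin M.d → ℕ), (∀ j, n' j ≤ n j) ∧
    ¬ M.ReachesFinal pfin (p, fun j => n j - n' j) ∧
    T = .app (.A p) (vterms n n') ∧ U = .app (.B p) (vterms n n')) ∨
  (∃ (q : M.Q) (i : Fin M.d) (n n' : Fin M.d → ℕ), (∀ j, n' j ≤ n j) ∧ n' i < n i ∧
    ¬ M.ReachesFinal pfin
      (q, Function.update (fun j => n j - n' j) i (n i - n' i - 1)) ∧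
    T = .app (.Ai q i) (vterms n n') ∧ U = .app (.B1 q i) (vterms n n')) ∨
  (∃ (q : M.Q) (i : Fin M.d) (n n' : Fin M.d → ℕ), (∀ j, n' j ≤ n j) ∧ n i = n' i ∧
    T = .app (.Ai q i) (vterms n n') ∧ U = .app (.B2 q i) (vterms n n'))

/-! ### Overwriting entries of the tuple `v(n̄,n̄')` -/

theorem vterms_succ {Q : Type} {d e : ℕ} (n n' : Fin (d + 1) → ℕ) :
    (List.finRange (d + 1)).flatMap (fun i => [(ipow (n i) : FOTerm (GNT Q e)), ipow (n' i)]) =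
      ipow (n 0) :: ipow (n' 0) ::
        (List.finRange d).flatMap (fun i => [ipow (n i.succ), ipow (n' i.succ)]) := by
  simp [List.finRange_succ, List.flatMap_map]

/-- The tuple `v(n̄,n̄')` with the number of counters decoupled from the type of nonterminals, so
that one can induct on the number of counters. -/
def vtermsAux (Q : Type) (e : ℕ) {d : ℕ} (n n' : Fin d → ℕ) : List (FOTerm (GNT Q e)) :=
  (List.finRange d).flatMap fun i => [ipow (n i), ipow (n' i)]

theorem vtermsAux_set_even (Q : Type) (e : ℕ) {d : ℕ} (n n' : Fin d → ℕ) (i : Fin d) (m : ℕ) :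
    (vtermsAux Q e n n').set (2 * (i : ℕ)) (ipow m) =
      vtermsAux Q e (Function.update n i m) n' := by
  induction d with
  | zero => exact i.elim0
  | succ d ih =>
    unfold vtermsAux
    rw [vterms_succ, vterms_succ]
    refine Fin.cases ?_ (fun j => ?_) i
    · simp [Function.update_of_ne, Fin.succ_ne_zero]
    · have h := ih (fun k => n k.succ) (fun k => n' k.succ) j
      unfold vtermsAux at h
      have h2 : 2 * ((j.succ : Fin (d + 1)) : ℕ) = 2 * (j : ℕ) + 1 + 1 := by simp; ring
      rw [h2, List.set_cons_succ, List.set_cons_succ, h]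
      simp [Function.update_apply, (Fin.succ_ne_zero j).symm]

theorem vtermsAux_set_odd (Q : Type) (e : ℕ) {d : ℕ} (n n' : Fin d → ℕ) (i : Fin d) (m : ℕ) :
    (vtermsAux Q e n n').set (2 * (i : ℕ) + 1) (ipow m) =
      vtermsAux Q e n (Function.update n' i m) := by
  induction d with
  | zero => exact i.elim0
  | succ d ih =>
    unfold vtermsAux
    rw [vterms_succ, vterms_succ]
    refine Fin.cases ?_ (fun j => ?_) i
    · simp [Function.update_of_ne, Fin.succ_ne_zero]
    · have h := ih (fun k => n k.succ) (fun k => n' k.succ) j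
      unfold vtermsAux at h
      have h2 : 2 * ((j.succ : Fin (d + 1)) : ℕ) + 1 = 2 * (j : ℕ) + 1 + 1 + 1 := by simp; ring
      rw [h2, List.set_cons_succ, List.set_cons_succ, h]
      simp [Function.update_apply, (Fin.succ_ne_zero j).symm]

theorem vtermsAux_getElem? (Q : Type) (e : ℕ) {d : ℕ} (n n' : Fin d → ℕ) (i : Fin d) :
    (vtermsAux Q e n n')[2 * (i : ℕ)]? = some (ipow (n i)) ∧
      (vtermsAux Q e n n')[2 * (i : ℕ) + 1]? = some (ipow (n' i)) := by
  induction d with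
  | zero => exact i.elim0
  | succ d ih =>
    unfold vtermsAux
    rw [vterms_succ]
    refine Fin.cases ?_ (fun j => ?_) i
    · simp
    · have h := ih (fun k => n k.succ) (fun k => n' k.succ) j
      unfold vtermsAux at h
      have h2 : 2 * ((j.succ : Fin (d + 1)) : ℕ) = 2 * (j : ℕ) + 1 + 1 := by simp; ring
      have h3 : 2 * (j : ℕ) + 1 + 1 + 1 = (2 * (j : ℕ) + 1) + 1 + 1 := rfl
      rw [h2, h3]
      simpa only [List.getElem?_cons_succ] using h

section Tuple

variable {Q : Type} {d : ℕ}

theorem vterms_set_even (n n' : Fin d → ℕ) (i : Fin d) (m : ℕ) :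
    (vterms n n' : List (FOTerm (GNT Q d))).set (2 * (i : ℕ)) (ipow m) =
      vterms (Function.update n i m) n' :=
  vtermsAux_set_even Q d n n' i m

theorem vterms_set_odd (n n' : Fin d → ℕ) (i : Fin d) (m : ℕ) :
    (vterms n n' : List (FOTerm (GNT Q d))).set (2 * (i : ℕ) + 1) (ipow m) =
      vterms n (Function.update n' i m) :=
  vtermsAux_set_odd Q d n n' i m

/-! ### Substituting `v(n̄,n̄')` into right-hand sides of rules -/

theorem FOTerm.subst_app {N : Type} (σ : ℕ → FOTerm N) (X : N) (ts : List (FOTerm N)) :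
    (FOTerm.app X ts).subst σ = .app X (ts.map (FOTerm.subst σ)) := by
  rw [FOTerm.subst]
  congr 1
  simp

theorem FOTerm.subst_var {N : Type} (σ : ℕ → FOTerm N) (k : ℕ) :
    (FOTerm.var k).subst σ = σ k := by
  rw [FOTerm.subst]

/-- `σ` assigns to the variables `x̄` the components of `v(n̄,n̄')`. -/
def Matches (σ : ℕ → FOTerm (GNT Q d)) (n n' : Fin d → ℕ) : Prop :=
  (List.range (2 * d)).map σ = vterms n n'

variable {σ : ℕ → FOTerm (GNT Q d)} {n n' : Fin d → ℕ}

theorem Matches.even (h : Matches σ n n') (i : Fin d) : σ (2 * (i : ℕ)) = ipow (n i) := by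
  have h1 := (vtermsAux_getElem? Q d n n' i).1
  have h2 : vtermsAux Q d n n' = (List.range (2 * d)).map σ := h.symm
  have h3 : 2 * (i : ℕ) < 2 * d := by omega
  rw [h2] at h1
  simpa [List.getElem?_range h3] using h1

theorem Matches.odd (h : Matches σ n n') (i : Fin d) : σ (2 * (i : ℕ) + 1) = ipow (n' i) := by
  have h1 := (vtermsAux_getElem? Q d n n' i).2
  have h2 : vtermsAux Q d n n' = (List.range (2 * d)).map σ := h.symm
  have h3 : 2 * (i : ℕ) + 1 < 2 * d := by omega
  rw [h2] at h1
  simpa [List.getElem?_range h3] using h1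

theorem Matches.map_xbar (h : Matches σ n n') :
    (xbar Q d).map (FOTerm.subst σ) = vterms n n' := by
  rw [← h, xbar, List.map_map]
  exact List.map_congr_left fun k _ => FOTerm.subst_var σ k

theorem Matches.subst_xbar (h : Matches σ n n') (X : GNT Q d) :
    (FOTerm.app X (xbar Q d)).subst σ = .app X (vterms n n') := by
  rw [FOTerm.subst_app, h.map_xbar]

theorem Matches.subst_inc (h : Matches σ n n') (X : GNT Q d) (i : Fin d) :
    (FOTerm.app X ((xbar Q d).set (2 * (i : ℕ)) (.app .I [.var (2 * (i : ℕ))]))).subst σ =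
      .app X (vterms (Function.update n i (n i + 1)) n') := by
  rw [FOTerm.subst_app, List.map_set, h.map_xbar, ← vterms_set_even, FOTerm.subst_app]
  simp [FOTerm.subst_var, h.even, iterTerm]

/-- A decrement is simulated by incrementing the second component of the pair for counter `i`. -/
theorem Matches.subst_dec (h : Matches σ n n') (X : GNT Q d) (i : Fin d) :
    (FOTerm.app X ((xbar Q d).set (2 * (i : ℕ) + 1)
      (.app .I [.var (2 * (i : ℕ) + 1)]))).subst σ =
      .app X (vterms n (Function.update n' i (n' i + 1))) := by
  rw [FOTerm.subst_app, List.map_set, h.map_xbar, ← vterms_set_odd, FOTerm.subst_app]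
  simp [FOTerm.subst_var, h.odd, iterTerm]

theorem Matches.subst_reset (h : Matches σ n n') (X : GNT Q d) (i : Fin d) :
    (FOTerm.app X (((xbar Q d).set (2 * (i : ℕ)) (.app .bot [])).set
      (2 * (i : ℕ) + 1) (.app .bot []))).subst σ =
      .app X (vterms (Function.update n i 0) (Function.update n' i 0)) := by
  rw [FOTerm.subst_app, List.map_set, List.map_set, h.map_xbar, ← vterms_set_odd,
    ← vterms_set_even, FOTerm.subst_app]
  simp [iterTerm]

end Tuple

/-! ### Matching moves -/

section Simulation

variable {M : RCM} {pfin : M.Q}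

theorem step_of_matches {X : GNT M.Q M.d} (hX : X.arity = 2 * M.d) {n n' : Fin M.d → ℕ}
    {σ : ℕ → FOTerm (GNT M.Q M.d)} (h : Matches σ n n') {α : GAct M.Q M.d}
    {V : FOTerm (GNT M.Q M.d)} (hr : GRule M pfin X α V) :
    (GrammarOf M pfin).Step (.app X (vterms n n')) α (V.subst σ) := by
  have h1 := Grammar.Step.step (G := GrammarOf M pfin) X α V σ hr
  have h2 : (GrammarOf M pfin).arity X = 2 * M.d := hX
  rw [h2] at h1
  rw [← h]
  exact h1

/-- Inversion of `step_of_matches`: every transition of `X(v(n̄,n̄'))` instantiates a rule of `X`. -/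
theorem exists_matches_of_step {X : GNT M.Q M.d} (hX : X.arity = 2 * M.d)
    {n n' : Fin M.d → ℕ} {α : GAct M.Q M.d} {T : FOTerm (GNT M.Q M.d)}
    (hs : (GrammarOf M pfin).Step (.app X (vterms n n')) α T) :
    ∃ V σ, GRule M pfin X α V ∧ Matches σ n n' ∧ T = V.subst σ := by
  generalize hS : FOTerm.app X (vterms n n') = S at hs
  obtain ⟨Y, α, V, σ, hr⟩ := hs
  simp only [FOTerm.app.injEq] at hS
  obtain ⟨rfl, hS⟩ := hS
  refine ⟨V, σ, hr, ?_, rfl⟩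
  change vterms n n' = List.map σ (List.range X.arity) at hS
  rw [hX] at hS
  exact hS.symm

/-- Non-reachability of `p_final` propagates along machine steps. -/
theorem not_reachesFinal_of_step {p q : M.Q} {m k : Fin M.d → ℕ}
    (h : ¬ M.ReachesFinal pfin (p, m)) (hs : M.StepR (p, m) (q, k)) :
    ¬ M.ReachesFinal pfin (q, k) :=
  fun ⟨l, hl⟩ => h ⟨l, .head hs hl⟩

theorem defenderRel_main {p : M.Q} {n n' : Fin M.d → ℕ} (hle : ∀ j, n' j ≤ n j)
    (h : ¬ M.ReachesFinal pfin (p, fun j => n j - n' j)) :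
    DefenderRel M pfin (.app (.A p) (vterms n n')) (.app (.B p) (vterms n n')) :=
  Or.inr (Or.inl ⟨p, n, n', hle, h, rfl, rfl⟩)

theorem defenderRel_inc {p q : M.Q} {n n' : Fin M.d → ℕ} {i : Fin M.d}
    (hle : ∀ j, n' j ≤ n j) (h : ¬ M.ReachesFinal pfin (p, fun j => n j - n' j))
    (hδ : M.δ p (.inc i) q) :
    DefenderRel M pfin (.app (.A q) (vterms (Function.update n i (n i + 1)) n'))
      (.app (.B q) (vterms (Function.update n i (n i + 1)) n')) := by
  have h1 := not_reachesFinal_of_step h (.inc hδ)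
  refine defenderRel_main (fun j => ?_) ?_
  · have := hle j
    by_cases hj : j = i
    · subst hj; simp; omega
    · simp [hj, this]
  · convert h1 using 3
    funext j
    have := hle j
    by_cases hj : j = i
    · subst hj; simp; omega
    · simp [hj]

theorem defenderRel_reset {p q : M.Q} {n n' : Fin M.d → ℕ} {i : Fin M.d}
    (hle : ∀ j, n' j ≤ n j) (h : ¬ M.ReachesFinal pfin (p, fun j => n j - n' j))
    (hδ : M.δ p (.reset i) q) :
    DefenderRel M pfin
      (.app (.A q) (vterms (Function.update n i 0) (Function.update n' i 0)))
      (.app (.B q) (vterms (Function.update n i 0) (Function.update n' i 0))) := by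
  have h1 := not_reachesFinal_of_step h (.reset hδ)
  refine defenderRel_main (fun j => ?_) ?_
  · by_cases hj : j = i
    · subst hj; simp
    · simp [hj, hle j]
  · convert h1 using 3
    funext j
    by_cases hj : j = i
    · subst hj; simp
    · simp [hj]

/-- After the action `a` following a genuine decrement, the pair is again of the main form. -/
theorem defenderRel_dec {q : M.Q} {n n' : Fin M.d → ℕ} {i : Fin M.d}
    (hle : ∀ j, n' j ≤ n j) (hlt : n' i < n i)
    (h : ¬ M.ReachesFinal pfin
      (q, Function.update (fun j => n j - n' j) i (n i - n' i - 1))) :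
    DefenderRel M pfin (.app (.A q) (vterms n (Function.update n' i (n' i + 1))))
      (.app (.B q) (vterms n (Function.update n' i (n' i + 1)))) := by
  refine defenderRel_main (fun j => ?_) ?_
  · by_cases hj : j = i
    · subst hj; simp; omega
    · simp [hj, hle j]
  · convert h using 3
    funext j
    by_cases hj : j = i
    · subst hj; simp; omega
    · simp [hj]

/-- Moves of the left component (the `A` side) are answered by the right one. -/
theorem DefenderRel.forth {T U : FOTerm (GNT M.Q M.d)} (hTU : DefenderRel M pfin T U)
    {α : GAct M.Q M.d} {T' : FOTerm (GNT M.Q M.d)} (hs : (GrammarOf M pfin).Step T α T') :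
    ∃ U', (GrammarOf M pfin).Step U α U' ∧ DefenderRel M pfin T' U' := by
  rcases hTU with rfl | ⟨p, n, n', hle, hnr, rfl, rfl⟩ | ⟨q, i, n, n', hle, hlt, hnr, rfl, rfl⟩ |
    ⟨q, i, n, n', hle, heq, rfl, rfl⟩
  · exact ⟨T', hs, .inl rfl⟩
  · obtain ⟨V, σ, hr, hσ, rfl⟩ := exists_matches_of_step (by rfl) hs
    cases hr with
    | finrule => exact (hnr ⟨_, .refl⟩).elim
    | incA hδ =>
      refine ⟨_, step_of_matches (by rfl) hσ (.incB hδ), ?_⟩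
      rw [hσ.subst_inc, hσ.subst_inc]
      exact defenderRel_inc hle hnr hδ
    | resetA hδ =>
      refine ⟨_, step_of_matches (by rfl) hσ (.resetB hδ), ?_⟩
      rw [hσ.subst_reset, hσ.subst_reset]
      exact defenderRel_reset hle hnr hδ
    | @decA _ q i hδ =>
      rcases (hle i).lt_or_eq with hlt | heq
      · refine ⟨_, step_of_matches (by rfl) hσ (.decBB1 hδ), ?_⟩
        rw [hσ.subst_xbar, hσ.subst_xbar]
        refine .inr (.inr (.inl ⟨q, i, n, n', hle, hlt, ?_, rfl, rfl⟩))
        exact not_reachesFinal_of_step hnr (.dec hδ (Nat.sub_pos_of_lt hlt))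
      · refine ⟨_, step_of_matches (by rfl) hσ (.decBB2 hδ), ?_⟩
        rw [hσ.subst_xbar, hσ.subst_xbar]
        exact .inr (.inr (.inr ⟨q, i, n, n', hle, heq.symm, rfl, rfl⟩))
    | decAB1 hδ => exact ⟨_, step_of_matches (by rfl) hσ (.decBB1 hδ), .inl rfl⟩
    | decAB2 hδ => exact ⟨_, step_of_matches (by rfl) hσ (.decBB2 hδ), .inl rfl⟩
  · obtain ⟨V, σ, hr, hσ, rfl⟩ := exists_matches_of_step (by rfl) hs
    cases hr with
    | auxAa hδ =>
      refine ⟨_, step_of_matches (by rfl) hσ (.auxB1a hδ), ?_⟩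
      rw [hσ.subst_dec, hσ.subst_dec]
      exact defenderRel_dec hle hlt hnr
    | auxAb hδ => exact ⟨_, step_of_matches (by rfl) hσ (.auxB1b hδ), .inl rfl⟩
  · obtain ⟨V, σ, hr, hσ, rfl⟩ := exists_matches_of_step (by rfl) hs
    cases hr with
    | auxAa hδ => exact ⟨_, step_of_matches (by rfl) hσ (.auxB2a hδ), .inl rfl⟩
    | auxAb hδ =>
      refine ⟨_, step_of_matches (by rfl) hσ (.auxB2b hδ), .inl ?_⟩
      rw [FOTerm.subst_var, FOTerm.subst_var, hσ.even, hσ.odd, heq]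

/-- Moves of the right component are answered by the left one. -/
theorem DefenderRel.back {T U : FOTerm (GNT M.Q M.d)} (hTU : DefenderRel M pfin T U)
    {α : GAct M.Q M.d} {U' : FOTerm (GNT M.Q M.d)} (hs : (GrammarOf M pfin).Step U α U') :
    ∃ T', (GrammarOf M pfin).Step T α T' ∧ DefenderRel M pfin T' U' := by
  rcases hTU with rfl | ⟨p, n, n', hle, hnr, rfl, rfl⟩ | ⟨q, i, n, n', hle, hlt, hnr, rfl, rfl⟩ |
    ⟨q, i, n, n', hle, heq, rfl, rfl⟩
  · exact ⟨U', hs, .inl rfl⟩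
  · obtain ⟨V, σ, hr, hσ, rfl⟩ := exists_matches_of_step (by rfl) hs
    cases hr with
    | incB hδ =>
      refine ⟨_, step_of_matches (by rfl) hσ (.incA hδ), ?_⟩
      rw [hσ.subst_inc, hσ.subst_inc]
      exact defenderRel_inc hle hnr hδ
    | resetB hδ =>
      refine ⟨_, step_of_matches (by rfl) hσ (.resetA hδ), ?_⟩
      rw [hσ.subst_reset, hσ.subst_reset]
      exact defenderRel_reset hle hnr hδ
    | decBB1 hδ => exact ⟨_, step_of_matches (by rfl) hσ (.decAB1 hδ), .inl rfl⟩
    | decBB2 hδ => exact ⟨_, step_of_matches (by rfl) hσ (.decAB2 hδ), .inl rfl⟩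
  · obtain ⟨V, σ, hr, hσ, rfl⟩ := exists_matches_of_step (by rfl) hs
    cases hr with
    | auxB1a hδ =>
      refine ⟨_, step_of_matches (by rfl) hσ (.auxAa hδ), ?_⟩
      rw [hσ.subst_dec, hσ.subst_dec]
      exact defenderRel_dec hle hlt hnr
    | auxB1b hδ => exact ⟨_, step_of_matches (by rfl) hσ (.auxAb hδ), .inl rfl⟩
  · obtain ⟨V, σ, hr, hσ, rfl⟩ := exists_matches_of_step (by rfl) hs
    cases hr with
    | auxB2a hδ => exact ⟨_, step_of_matches (by rfl) hσ (.auxAa hδ), .inl rfl⟩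
    | auxB2b hδ =>
      refine ⟨_, step_of_matches (by rfl) hσ (.auxAb hδ), .inl ?_⟩
      rw [FOTerm.subst_var, FOTerm.subst_var, hσ.even, hσ.odd, heq]

end Simulation

/-- The symmetric closure of `DefenderRel` is a bisimulation
in `L_{G(M)}`. -/
theorem defenderRel_symmClosure_isBisimulation (M : RCM) (pinit pfin : M.Q) :
    (GrammarOf M pfin).IsBisimulation
      (fun T U => DefenderRel M pfin T U ∨ DefenderRel M pfin U T) := by
  refine ⟨fun T U h => h.symm, fun T U h α T' hs => ?_⟩
  rcases h with h | h
  · obtain ⟨U', hU, hr⟩ := h.forth hs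
    exact ⟨U', hU, .inl hr⟩
  · obtain ⟨U', hU, hr⟩ := h.back hs
    exact ⟨U', hU, .inr hr⟩
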